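/- arXiv:1306.2697 — 3 statements merged into one kernel-verified Lean document; each statement's English description precedes it below -/
import Mathlib

section
/- Sequential composition left-subdistributes over probabilistic choice with respect to simulation: for probabilistic automata P, Q, R with pairwise disjoint state spaces and every p ∈ [0,1], P · (Q ⊕_p R) ≤ P · Q ⊕_p P · R (where on the right the two occurrences of P are taken as disjoint copies). -/
open scoped ENNReal

namespace PCKA

/-- A probabilistic automaton over the (non-silent) action alphabet `α`, with state
space `σ`.  Transition labels are `Option α`, where `none` plays the role of the
silent action `τ`; `trans x a μ` means `x —a→ μ` where `μ` is a (countably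
supported) probability distribution over states, `init` is the initial
distribution and `final` the set of final states. -/
structure PAut (α : Type) (σ : Type) where
  trans : σ → Option α → PMF σ → Prop
  init : PMF σ
  final : Set σ

/-- The lifting `S̄ ⊆ D(X) × D(Y)` of a relation `S ⊆ X × D(Y)`: `μ S̄ ν` iff there
are weights `p n` summing to `1`, states `x n` and distributions `νs n` with
`μ = Σ_n p n · δ_{x n}`, `x n S νs n` for each `n`, and `ν = Σ_n p n · νs n`. -/
def Lift {X Y : Type} (S : X → PMF Y → Prop) (μ : PMF X) (ν : PMF Y) : Prop :=
  ∃ (p : ℕ → ℝ≥0∞) (x : ℕ → X) (νs : ℕ → PMF Y),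
    (∑' n, p n) = 1 ∧
    (∀ s, μ s = ∑' n, p n * (PMF.pure (x n)) s) ∧
    (∀ n, S (x n) (νs n)) ∧
    (∀ t, ν t = ∑' n, p n * (νs n) t)

/-- The double lifting `T̿ ⊆ D(X) × D(Z)` of a relation `T ⊆ X × Z`, via a weight
function `w`. -/
def DLift {X Z : Type} (T : X → Z → Prop) (μ : PMF X) (ψ : PMF Z) : Prop :=
  ∃ w : X → Z → ℝ≥0∞,
    (∀ x z, 0 < w x z → T x z) ∧
    (∀ x, (∑' z, w x z) = μ x) ∧
    (∀ z, (∑' x, w x z) = ψ z)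

/-- Flattening `π : D(D(Y)) → D(Y)`, `π(ψ) = Σ_{ν} ψ(ν)·ν`. -/
noncomputable def flat {Y : Type} (ψ : PMF (PMF Y)) : PMF Y := ψ.bind id

/-- Single transition step, with the τ-transitions extended by reflexivity
(`x —τ→ δ_x` is always allowed). -/
def step {α σ : Type} (P : PAut α σ) (a : Option α) (x : σ) (μ : PMF σ) : Prop :=
  P.trans x a μ ∨ (a = none ∧ μ = PMF.pure x)

/-- Weak internal moves `⇒`: the reflexive-transitive closure of the lifted
(extended) τ-transition relation on distributions. -/
def WeakTau {α σ : Type} (P : PAut α σ) : PMF σ → PMF σ → Prop :=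
  Relation.ReflTransGen (Lift (step P none))

/-- Weak `a`-transition `μ ⇒^a μ'`: `μ ⇒ μ₁ —ā→ μ₂ ⇒ μ'`. -/
def WeakStep {α σ : Type} (P : PAut α σ) (a : Option α) (μ μ' : PMF σ) : Prop :=
  ∃ μ₁ μ₂, WeakTau P μ μ₁ ∧ Lift (step P a) μ₁ μ₂ ∧ WeakTau P μ₂ μ'

/-- A probabilistic simulation from `P` to `Q` (Deng et al. style). -/
structure IsSimulation {α σ τ' : Type} (P : PAut α σ) (Q : PAut α τ')
    (S : σ → PMF τ' → Prop) : Prop where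
  init : ∃ ν₀', WeakTau Q Q.init ν₀' ∧ Lift S P.init ν₀'
  step : ∀ x a μ', P.trans x a μ' → ∀ ν, S x ν →
    ∃ ν', WeakStep Q a ν ν' ∧ Lift S μ' ν'
  final : ∀ x ν, x ∈ P.final → S x ν →
    ∃ ν', WeakTau Q ν ν' ∧ ∀ y ∈ ν'.support, y ∈ Q.final

/-- A probabilistic weak forward simulation from `P` to `Q` (Segala style). -/
structure IsWFSimulation {α σ τ' : Type} (P : PAut α σ) (Q : PAut α τ')
    (S : σ → PMF τ' → Prop) : Prop where
  init : ∃ ψ₀ : PMF (PMF τ'), DLift S P.init ψ₀ ∧ WeakTau Q Q.init (flat ψ₀)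
  step : ∀ x a μ', P.trans x a μ' → ∀ ν, S x ν →
    ∃ ψ : PMF (PMF τ'), WeakStep Q a ν (flat ψ) ∧ DLift S μ' ψ
  final : ∀ x ν, x ∈ P.final → S x ν →
    ∃ ψ : PMF (PMF τ'), (∀ ρ ∈ ψ.support, ∀ y ∈ ρ.support, y ∈ Q.final) ∧
      WeakTau Q ν (flat ψ)

/-- `P ≤ Q`: there exists a probabilistic simulation from `P` to `Q`. -/
def Sim {α σ τ' : Type} (P : PAut α σ) (Q : PAut α τ') : Prop :=
  ∃ S, IsSimulation P Q S

/-- Simulation equivalence `P ≡ Q`. -/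
def SimEquiv {α σ τ' : Type} (P : PAut α σ) (Q : PAut α τ') : Prop :=
  Sim P Q ∧ Sim Q P

/-- Convex combination `p·μ + (1−p)·ν` of two distributions. -/
noncomputable def mix {X : Type} (p : ℝ≥0∞) (hp : p ≤ 1) (μ ν : PMF X) : PMF X :=
  ⟨fun x => p * μ x + (1 - p) * ν x, by
    refine ENNReal.summable.hasSum_iff.mpr ?_
    rw [ENNReal.tsum_add, ENNReal.tsum_mul_left, ENNReal.tsum_mul_left,
      μ.tsum_coe, ν.tsum_coe, mul_one, mul_one, add_tsub_cancel_of_le hp]⟩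

/-- Product distribution `μ × ν`, with `(μ × ν)(x,y) = μ(x)·ν(y)`. -/
noncomputable def pprod {X Y : Type} (μ : PMF X) (ν : PMF Y) : PMF (X × Y) :=
  μ.bind fun x => ν.map fun y => (x, y)

/-- The skip automaton `1`: one state, no transitions, that state is final. -/
noncomputable def skip (α : Type) : PAut α Unit :=
  ⟨fun _ _ _ => False, PMF.pure (), Set.univ⟩

/-- The deadlock automaton `0`: one state, no transitions, no final state. -/
noncomputable def deadlock (α : Type) : PAut α Unit :=
  ⟨fun _ _ _ => False, PMF.pure (), ∅⟩

/-- Nondeterministic choice `P + Q`: disjoint union of the two automata (realised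
by the sum type) plus a fresh initial state `z = none` with `z —τ→ μ₀` and
`z —τ→ ν₀`. -/
noncomputable def nchoice {α σ τ' : Type} (P : PAut α σ) (Q : PAut α τ') :
    PAut α (Option (σ ⊕ τ')) where
  trans := fun s a μ =>
    match s with
    | none => a = none ∧
        (μ = P.init.map (fun x => some (Sum.inl x)) ∨
         μ = Q.init.map (fun y => some (Sum.inr y)))
    | some (Sum.inl x) => ∃ μ', P.trans x a μ' ∧ μ = μ'.map (fun x => some (Sum.inl x))
    | some (Sum.inr y) => ∃ ν', Q.trans y a ν' ∧ μ = ν'.map (fun y => some (Sum.inr y))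
  init := PMF.pure none
  final := {s | (∃ x ∈ P.final, s = some (Sum.inl x)) ∨ (∃ y ∈ Q.final, s = some (Sum.inr y))}

/-- Sequential composition `P · Q`: disjoint union (realised by the sum type),
with a τ-transition from each final state of `P` to the initial distribution of
`Q`; initial distribution that of `P`, final states those of `Q`. -/
noncomputable def pseq {α σ τ' : Type} (P : PAut α σ) (Q : PAut α τ') :
    PAut α (σ ⊕ τ') where
  trans := fun s a μ =>
    match s with
    | Sum.inl x =>
        (∃ μ', P.trans x a μ' ∧ μ = μ'.map Sum.inl) ∨
        (a = none ∧ x ∈ P.final ∧ μ = Q.init.map Sum.inr)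
    | Sum.inr y => ∃ ν', Q.trans y a ν' ∧ μ = ν'.map Sum.inr
  init := P.init.map Sum.inl
  final := {s | ∃ y ∈ Q.final, s = Sum.inr y}

/-- Kleene star `P*`: a fresh state `z = none` which is initial and the only
final state, with `z —τ→ μ₀` and `x —τ→ δ_z` for each final state `x` of `P`. -/
noncomputable def pstar {α σ : Type} (P : PAut α σ) : PAut α (Option σ) where
  trans := fun s a μ =>
    match s with
    | none => a = none ∧ μ = P.init.map some
    | some x =>
        (∃ μ', P.trans x a μ' ∧ μ = μ'.map some) ∨
        (a = none ∧ x ∈ P.final ∧ μ = PMF.pure none)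
  init := PMF.pure none
  final := {none}

/-- Probabilistic choice `P ⊕_p Q`: disjoint union with initial distribution
`p·μ₀ + (1−p)·ν₀`. -/
noncomputable def pchoice {α σ τ' : Type} (p : ℝ≥0∞) (hp : p ≤ 1)
    (P : PAut α σ) (Q : PAut α τ') : PAut α (σ ⊕ τ') where
  trans := fun s a μ =>
    match s with
    | Sum.inl x => ∃ μ', P.trans x a μ' ∧ μ = μ'.map Sum.inl
    | Sum.inr y => ∃ ν', Q.trans y a ν' ∧ μ = ν'.map Sum.inr
  init := mix p hp (P.init.map Sum.inl) (Q.init.map Sum.inr)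
  final := {s | (∃ x ∈ P.final, s = Sum.inl x) ∨ (∃ y ∈ Q.final, s = Sum.inr y)}

/-- CSP-style parallel composition `P ∥_A Q` synchronising on the frame `A`:
actions in `A` must be performed jointly, all other actions (including τ) are
interleaved. -/
noncomputable def par {α σ τ' : Type} (A : Set α) (P : PAut α σ) (Q : PAut α τ') :
    PAut α (σ × τ') where
  trans := fun s a μπ => ∃ μ ν, μπ = pprod μ ν ∧
    ((∃ b ∈ A, a = some b ∧ P.trans s.1 a μ ∧ Q.trans s.2 a ν) ∨
     ((∀ b ∈ A, a ≠ some b) ∧ P.trans s.1 a μ ∧ ν = PMF.pure s.2) ∨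
     ((∀ b ∈ A, a ≠ some b) ∧ Q.trans s.2 a ν ∧ μ = PMF.pure s.1))
  init := pprod P.init Q.init
  final := {s | s.1 ∈ P.final ∧ s.2 ∈ Q.final}

theorem lift_bind {X Y : Type} (S : X → PMF Y → Prop) (μ : PMF X) (g : X → PMF Y)
    (h : ∀ x, S x (g x)) : Lift S μ (μ.bind g) := by
  obtain ⟨x0, _⟩ := μ.support_nonempty
  have hc : Countable μ.support := μ.support_countable
  obtain ⟨e, he⟩ := exists_injective_nat μ.support
  have key : ∀ F : X → ℝ≥0∞, ∑' n, Function.extend e (fun a => μ a) 0 n *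
      F (Function.extend e Subtype.val (fun _ => x0) n) = ∑' x, μ x * F x := by
    intro F
    have h1 : (fun n => Function.extend e (fun a => μ a) 0 n *
        F (Function.extend e Subtype.val (fun _ => x0) n))
        = Function.extend e (fun a : μ.support => μ a * F a) 0 := by
      funext n
      by_cases hn : ∃ a, e a = n
      · obtain ⟨a, rfl⟩ := hn
        simp [he.extend_apply]
      · simp [Function.extend_apply' _ _ _ hn]
    rw [h1, tsum_extend_zero he]
    refine tsum_subtype_eq_of_support_subset (f := fun x => μ x * F x) ?_
    intro x hx
    rw [Function.mem_support] at hx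
    rw [PMF.mem_support_iff]
    exact left_ne_zero_of_mul hx
  refine ⟨Function.extend e (fun a => μ a) 0, Function.extend e Subtype.val (fun _ => x0),
    fun n => g (Function.extend e Subtype.val (fun _ => x0) n), ?_, ?_, ?_, ?_⟩
  · have := key (fun _ => 1)
    simpa using this
  · intro s
    rw [key (fun x => (PMF.pure x) s), ← PMF.bind_apply, PMF.bind_pure]
  · intro n
    exact h _
  · intro t
    rw [key (fun x => g x t), PMF.bind_apply]

theorem lift_mix {X Y : Type} (S : X → PMF Y → Prop) (p : ℝ≥0∞) (hp : p ≤ 1)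
    (x y : X) (μ ν : PMF Y) (hx : S x μ) (hy : S y ν) :
    Lift S (mix p hp (PMF.pure x) (PMF.pure y)) (mix p hp μ ν) := by
  have key : ∀ (F : ℕ → ℝ≥0∞),
      ∑' n, (if n = 0 then p else if n = 1 then 1 - p else 0) * F n
        = p * F 0 + (1 - p) * F 1 := by
    intro F
    rw [tsum_eq_sum (s := Finset.range 2)]
    · simp [Finset.sum_range_succ]
    · intro n hn
      have h0 : n ≠ 0 := by rintro rfl; simp at hn
      have h1 : n ≠ 1 := by rintro rfl; simp at hn
      simp [h0, h1]
  refine ⟨fun n => if n = 0 then p else if n = 1 then 1 - p else 0,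
    fun n => if n = 0 then x else y, fun n => if n = 0 then μ else ν, ?_, ?_, ?_, ?_⟩
  · have := key (fun _ => 1)
    simpa [add_tsub_cancel_of_le hp] using this
  · intro s
    rw [key (fun n => (PMF.pure (if n = 0 then x else y)) s)]
    rfl
  · intro n
    by_cases h : n = 0 <;> simp [h, hx, hy]
  · intro s
    rw [key (fun n => (if n = 0 then μ else ν) s)]
    rfl

theorem mix_apply {X : Type} (p : ℝ≥0∞) (hp : p ≤ 1) (μ ν : PMF X) (x : X) :
    mix p hp μ ν x = p * μ x + (1 - p) * ν x := rfl

theorem mix_self {X : Type} (p : ℝ≥0∞) (hp : p ≤ 1) (μ : PMF X) : mix p hp μ μ = μ := by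
  ext x
  rw [mix_apply, ← add_mul, add_tsub_cancel_of_le hp, one_mul]

theorem mix_bind {X Y : Type} (p : ℝ≥0∞) (hp : p ≤ 1) (μ ν : PMF X) (f : X → PMF Y) :
    (mix p hp μ ν).bind f = mix p hp (μ.bind f) (ν.bind f) := by
  ext y
  simp only [mix_apply, PMF.bind_apply, ← ENNReal.tsum_mul_left, ← ENNReal.tsum_add]
  refine tsum_congr fun x => ?_
  ring

theorem bind_mix {X Y : Type} (p : ℝ≥0∞) (hp : p ≤ 1) (μ : PMF X) (f g : X → PMF Y) :
    μ.bind (fun x => mix p hp (f x) (g x)) = mix p hp (μ.bind f) (μ.bind g) := by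
  ext y
  simp only [mix_apply, PMF.bind_apply, ← ENNReal.tsum_mul_left, ← ENNReal.tsum_add]
  refine tsum_congr fun x => ?_
  ring

theorem lift_pure {X Y : Type} (S : X → PMF Y → Prop) (x : X) (μ : PMF Y) (hx : S x μ) :
    Lift S (PMF.pure x) μ := by
  have := lift_mix S 1 le_rfl x x μ μ hx hx
  rwa [mix_self, mix_self] at this

/-- The simulation, as a function: a state of `P` is related to the mixture of its two copies. -/
noncomputable def simFun {σ₁ σ₂ σ₃ : Type} (p : ℝ≥0∞) (hp : p ≤ 1) :
    σ₁ ⊕ (σ₂ ⊕ σ₃) → PMF ((σ₁ ⊕ σ₂) ⊕ (σ₁ ⊕ σ₃))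
  | Sum.inl x => mix p hp (PMF.pure (Sum.inl (Sum.inl x))) (PMF.pure (Sum.inr (Sum.inl x)))
  | Sum.inr (Sum.inl y) => PMF.pure (Sum.inl (Sum.inr y))
  | Sum.inr (Sum.inr z) => PMF.pure (Sum.inr (Sum.inr z))

theorem simFun_inl {σ₁ σ₂ σ₃ : Type} (p : ℝ≥0∞) (hp : p ≤ 1) (μ : PMF σ₁) :
    (μ.map Sum.inl).bind (simFun (σ₂ := σ₂) (σ₃ := σ₃) p hp)
      = mix p hp ((μ.map Sum.inl).map Sum.inl) ((μ.map Sum.inl).map Sum.inr) := by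
  rw [PMF.bind_map, PMF.map_comp, PMF.map_comp]
  exact bind_mix p hp μ _ _

theorem simFun_inrl {σ₁ σ₂ σ₃ : Type} (p : ℝ≥0∞) (hp : p ≤ 1) (μ : PMF σ₂) :
    ((μ.map Sum.inl).map Sum.inr).bind (simFun (σ₁ := σ₁) (σ₃ := σ₃) p hp)
      = (μ.map Sum.inr).map Sum.inl := by
  rw [PMF.bind_map, PMF.bind_map, PMF.map_comp]
  rfl

theorem simFun_inrr {σ₁ σ₂ σ₃ : Type} (p : ℝ≥0∞) (hp : p ≤ 1) (μ : PMF σ₃) :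
    ((μ.map Sum.inr).map Sum.inr).bind (simFun (σ₁ := σ₁) (σ₂ := σ₂) p hp)
      = (μ.map Sum.inr).map Sum.inr := by
  rw [PMF.bind_map, PMF.bind_map, PMF.map_comp]
  rfl

theorem mix_map {X Y : Type} (p : ℝ≥0∞) (hp : p ≤ 1) (μ ν : PMF X) (f : X → Y) :
    (mix p hp μ ν).map f = mix p hp (μ.map f) (ν.map f) :=
  mix_bind p hp μ ν _

/-- sequential composition left-subdistributes over probabilistic
choice: `P · (Q ⊕_p R) ≤ P · Q ⊕_p P · R` (the two occurrences of `P` on the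
right are disjoint copies). -/
theorem seq_left_subdistrib_pchoice {α σ₁ σ₂ σ₃ : Type}
    (P : PAut α σ₁) (Q : PAut α σ₂) (R : PAut α σ₃)
    (p : ℝ≥0∞) (hp : p ≤ 1) :
    Sim (pseq P (pchoice p hp Q R))
      (pchoice p hp (pseq P Q) (pseq P R)) := by
  refine ⟨fun s ν => ν = simFun p hp s, ⟨?_, ?_, ?_⟩⟩
  · refine ⟨_, Relation.ReflTransGen.refl, ?_⟩
    have := lift_bind (fun s ν => ν = simFun p hp s) (pseq P (pchoice p hp Q R)).init
      (simFun p hp) (fun _ => rfl)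
    have h2 : (pseq P (pchoice p hp Q R)).init.bind (simFun p hp)
      = (pchoice p hp (pseq P Q) (pseq P R)).init := simFun_inl p hp P.init
    rwa [h2] at this
  · rintro x a μ' ht ν rfl
    refine ⟨μ'.bind (simFun p hp), ⟨_, _, Relation.ReflTransGen.refl, ?_,
      Relation.ReflTransGen.refl⟩, lift_bind _ _ _ (fun _ => rfl)⟩
    rcases x with x | y | z
    · rcases ht with ⟨μ, hμ, rfl⟩ | ⟨rfl, hx, rfl⟩
      · rw [simFun_inl]
        exact lift_mix _ p hp _ _ _ _ (Or.inl ⟨_, Or.inl ⟨μ, hμ, rfl⟩, rfl⟩)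
          (Or.inl ⟨_, Or.inl ⟨μ, hμ, rfl⟩, rfl⟩)
      · have h2 : ((pchoice p hp Q R).init.map Sum.inr).bind (simFun (σ₁ := σ₁) p hp)
            = mix p hp ((Q.init.map Sum.inr).map Sum.inl)
              ((R.init.map Sum.inr).map Sum.inr) := by
          rw [← simFun_inrl p hp, ← simFun_inrr p hp, ← mix_bind, ← mix_map]
          rfl
        rw [h2]
        exact lift_mix _ p hp _ _ _ _ (Or.inl ⟨_, Or.inr ⟨rfl, hx, rfl⟩, rfl⟩)
          (Or.inl ⟨_, Or.inr ⟨rfl, hx, rfl⟩, rfl⟩)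
    · obtain ⟨_, ⟨μ, hμ, rfl⟩, rfl⟩ := ht
      rw [simFun_inrl]
      exact lift_pure _ _ _ (Or.inl ⟨_, ⟨μ, hμ, rfl⟩, rfl⟩)
    · obtain ⟨_, ⟨μ, hμ, rfl⟩, rfl⟩ := ht
      rw [simFun_inrr]
      exact lift_pure _ _ _ (Or.inl ⟨_, ⟨μ, hμ, rfl⟩, rfl⟩)
  · rintro x ν ⟨w, hw, rfl⟩ rfl
    refine ⟨_, Relation.ReflTransGen.refl, ?_⟩
    rcases hw with ⟨y, hy, rfl⟩ | ⟨z, hz, rfl⟩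
    · intro u hu
      obtain rfl := (PMF.mem_support_pure_iff _ _).1 hu
      exact Or.inl ⟨_, ⟨y, hy, rfl⟩, rfl⟩
    · intro u hu
      obtain rfl := (PMF.mem_support_pure_iff _ _).1 hu
      exact Or.inr ⟨_, ⟨z, hz, rfl⟩, rfl⟩

end PCKA
end

section
/- The Kleene star of a probabilistic automaton satisfies the unfolding law up to simulation equivalence: for every probabilistic automaton P, P* ≡ 1 + P · P*. -/
open scoped ENNReal

namespace PCKA

theorem Lift.of_bind {X Y : Type} {S : X → PMF Y → Prop} (q : PMF ℕ) (x : ℕ → X)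
    (νs : ℕ → PMF Y) (h : ∀ n, S (x n) (νs n)) :
    Lift S (q.bind fun n => PMF.pure (x n)) (q.bind νs) :=
  ⟨q, x, νs, q.tsum_coe, fun s => PMF.bind_apply _ _ _, h, fun t => PMF.bind_apply _ _ _⟩

theorem Lift.of_pure {X Y : Type} {S : X → PMF Y → Prop} {x : X} {ν : PMF Y} (h : S x ν) :
    Lift S (PMF.pure x) ν := by
  have := Lift.of_bind (S := S) (PMF.pure 0) (fun _ => x) (fun _ => ν) (fun _ => h)
  simpa only [PMF.pure_bind] using this

theorem exists_enum {X : Type} (μ : PMF X) :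
    ∃ (q : PMF ℕ) (x : ℕ → X), μ = q.map x := by
  obtain ⟨a, ha⟩ := μ.support_nonempty
  haveI : Nonempty X := ⟨a⟩
  obtain ⟨e, he⟩ := Set.countable_iff_exists_injOn.mp μ.support_countable
  refine ⟨μ.map e, Function.invFunOn e μ.support, ?_⟩
  rw [PMF.map_comp]
  ext s
  rw [PMF.map_apply]
  have key : ∀ b ∈ μ.support, Function.invFunOn e μ.support (e b) = b :=
    fun b hb => he.leftInvOn_invFunOn hb
  rw [tsum_eq_single s]
  · by_cases hs : s ∈ μ.support
    · simp [key s hs]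
    · have : μ s = 0 := by simpa [PMF.mem_support_iff] using hs
      simp [this]
  · intro b hb
    by_cases hs : b ∈ μ.support
    · simp [key b hs, Ne.symm hb]
    · have : μ b = 0 := by simpa [PMF.mem_support_iff] using hs
      simp [this]

/-- The relation between states and point distributions induced by a relation on states. -/
def Dirac {X Y : Type} (r : X → Y → Prop) (x : X) (ν : PMF Y) : Prop :=
  ∃ y, r x y ∧ ν = PMF.pure y

theorem Lift.of_map {X Y Z : Type} {r : X → Y → Prop} (μ : PMF Z) (f : Z → X) (g : Z → Y)
    (h : ∀ z, r (f z) (g z)) : Lift (Dirac r) (μ.map f) (μ.map g) := by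
  obtain ⟨q, x, rfl⟩ := exists_enum μ
  rw [PMF.map_comp, PMF.map_comp]
  exact Lift.of_bind q (fun n => f (x n)) (fun n => PMF.pure (g (x n)))
    fun n => ⟨_, h _, rfl⟩

theorem Lift.of_dirac {X Y : Type} {r : X → Y → Prop} {x : X} {y : Y} (h : r x y) :
    Lift (Dirac r) (PMF.pure x) (PMF.pure y) := Lift.of_pure ⟨y, h, rfl⟩

theorem sim_of_dirac {α σ τ' : Type} {P : PAut α σ} {Q : PAut α τ'} (r : σ → τ' → Prop)
    (hi : Lift (Dirac r) P.init Q.init)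
    (hs : ∀ x y, r x y → ∀ a μ', P.trans x a μ' →
      ∃ ν', step Q a y ν' ∧ Lift (Dirac r) μ' ν')
    (hf : ∀ x y, r x y → x ∈ P.final →
      ∃ y', step Q none y (PMF.pure y') ∧ y' ∈ Q.final) : Sim P Q := by
  refine ⟨Dirac r, ⟨⟨Q.init, .refl, hi⟩, ?_, ?_⟩⟩
  · rintro x a μ' ht _ ⟨y, hr, rfl⟩
    obtain ⟨ν', h1, h2⟩ := hs x y hr a μ' ht
    exact ⟨ν', ⟨_, _, .refl, Lift.of_pure h1, .refl⟩, h2⟩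
  · rintro x _ hx ⟨y, hr, rfl⟩
    obtain ⟨y', h1, h2⟩ := hf x y hr hx
    refine ⟨PMF.pure y', .single (Lift.of_pure h1), fun z hz => ?_⟩
    rw [PMF.support_pure, Set.mem_singleton_iff] at hz
    exact hz ▸ h2

/-- Matching of states of `P*` with states of `1 + P · P*`. -/
inductive Fwd {σ : Type} : Option σ → Option (Unit ⊕ (σ ⊕ Option σ)) → Prop
  | start : Fwd none none
  | copy (x : σ) : Fwd (some x) (some (Sum.inr (Sum.inl x)))
  | same (s : Option σ) : Fwd s (some (Sum.inr (Sum.inr s)))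

/-- Matching of states of `1 + P · P*` with states of `P*`. -/
inductive Bwd {σ : Type} : Option (Unit ⊕ (σ ⊕ Option σ)) → Option σ → Prop
  | start : Bwd none none
  | unit (u : Unit) : Bwd (some (Sum.inl u)) none
  | copy (x : σ) : Bwd (some (Sum.inr (Sum.inl x))) (some x)
  | same (s : Option σ) : Bwd (some (Sum.inr (Sum.inr s))) s

theorem fwd_sim {α σ : Type} (P : PAut α σ) :
    Sim (pstar P) (nchoice (skip α) (pseq P (pstar P))) := by
  refine sim_of_dirac Fwd (Lift.of_dirac .start) ?_ ?_
  · rintro _ _ (_ | x | s) a μ' ht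
    · obtain ⟨rfl, rfl⟩ := ht
      refine ⟨_, Or.inl ⟨rfl, Or.inr rfl⟩, ?_⟩
      simp only [pseq, PMF.map_comp]
      exact Lift.of_map _ _ _ fun x => .copy x
    · rcases ht with ⟨μ, h, rfl⟩ | ⟨rfl, hx, rfl⟩
      · refine ⟨_, Or.inl ⟨_, Or.inl ⟨μ, h, rfl⟩, rfl⟩, ?_⟩
        rw [PMF.map_comp]
        exact Lift.of_map _ _ _ fun x => .copy x
      · refine ⟨_, Or.inl ⟨_, Or.inr ⟨rfl, hx, rfl⟩, rfl⟩, ?_⟩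
        simp only [pstar, PMF.pure_map]
        exact Lift.of_dirac (.same none)
    · refine ⟨_, Or.inl ⟨_, ⟨μ', ht, rfl⟩, rfl⟩, ?_⟩
      rw [PMF.map_comp]
      have := Lift.of_map (r := Fwd (σ := σ)) μ' id
        ((fun y => some (Sum.inr y)) ∘ Sum.inr) fun s => .same s
      rwa [PMF.map_id] at this
  · rintro _ _ (_ | x | s) hx
    · refine ⟨some (Sum.inl ()), Or.inl ⟨rfl, Or.inl ?_⟩, Or.inl ⟨(), trivial, rfl⟩⟩
      simp only [skip, PMF.pure_map]
    · cases hx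
    · exact ⟨_, Or.inr ⟨rfl, rfl⟩, Or.inr ⟨_, ⟨_, hx, rfl⟩, rfl⟩⟩

theorem bwd_sim {α σ : Type} (P : PAut α σ) :
    Sim (nchoice (skip α) (pseq P (pstar P))) (pstar P) := by
  refine sim_of_dirac Bwd (Lift.of_dirac .start) ?_ ?_
  · rintro _ _ (_ | u | x | s) a μ' ht
    · obtain ⟨rfl, rfl | rfl⟩ := ht
      · refine ⟨_, Or.inr ⟨rfl, rfl⟩, ?_⟩
        simp only [skip, PMF.pure_map]
        exact Lift.of_dirac (.unit ())
      · refine ⟨_, Or.inl ⟨rfl, rfl⟩, ?_⟩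
        simp only [pseq, PMF.map_comp]
        exact Lift.of_map _ _ _ fun x => .copy x
    · obtain ⟨_, h, _⟩ := ht
      exact h.elim
    · obtain ⟨_, ⟨μ, h, rfl⟩ | ⟨rfl, hx, rfl⟩, rfl⟩ := ht
      · refine ⟨_, Or.inl (Or.inl ⟨μ, h, rfl⟩), ?_⟩
        rw [PMF.map_comp]
        exact Lift.of_map _ _ _ fun x => .copy x
      · refine ⟨_, Or.inl (Or.inr ⟨rfl, hx, rfl⟩), ?_⟩
        simp only [pstar, PMF.pure_map]
        exact Lift.of_dirac (.same none)
    · obtain ⟨_, ⟨μ, h, rfl⟩, rfl⟩ := ht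
      refine ⟨μ, Or.inl h, ?_⟩
      rw [PMF.map_comp]
      have := Lift.of_map (r := Bwd (σ := σ)) μ
        ((fun y => some (Sum.inr y)) ∘ Sum.inr) id fun s => .same s
      rwa [PMF.map_id] at this
  · rintro _ _ (_ | u | x | s) hx
    · exact ⟨none, Or.inr ⟨rfl, rfl⟩, rfl⟩
    · exact ⟨none, Or.inr ⟨rfl, rfl⟩, rfl⟩
    · obtain ⟨_, _, h⟩ | ⟨_, ⟨_, _, rfl⟩, h⟩ := hx <;> simp at h
    · obtain ⟨_, _, h⟩ | ⟨_, ⟨_, hy, rfl⟩, h⟩ := hx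
      · simp at h
      · simp only [Option.some.injEq, Sum.inr.injEq] at h
        subst h
        exact ⟨_, Or.inr ⟨rfl, rfl⟩, hy⟩

/-- the Kleene star satisfies the unfolding law up to simulation
equivalence: `P* ≡ 1 + P · P*`. -/
theorem star_unfold {α σ : Type} (P : PAut α σ) :
    SimEquiv (pstar P) (nchoice (skip α) (pseq P (pstar P))) := by
  exact ⟨fwd_sim P, bwd_sim P⟩

end PCKA
end

section
/- Parallel composition subdistributes over nondeterministic choice with respect to simulation: for probabilistic automata P, Q, R with pairwise disjoint state spaces and any frame A ⊆ E, P ∥_A Q + P ∥_A R ≤ P ∥_A (Q + R) (where on the left the two occurrences of P are taken as disjoint copies). -/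
open scoped ENNReal

namespace PCKA

theorem Lift_bind {X Y Z : Type} {S : Y → PMF Z → Prop} (μ : PMF X) (g : X → Y)
    (f : X → PMF Z) (h : ∀ x, S (g x) (f x)) : Lift S (μ.map g) (μ.bind f) := by
  classical
  obtain ⟨k, hk⟩ := (μ.support_countable).exists_eq_range μ.support_nonempty
  have hex : ∀ x, ∃ n, x ∈ μ.support → k n = x := by
    intro x
    by_cases hx : x ∈ μ.support
    · rw [hk] at hx
      obtain ⟨n, hn⟩ := hx
      exact ⟨n, fun _ => hn⟩
    · exact ⟨0, fun h => absurd h hx⟩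
  choose e he using hex
  have key : ∀ {W : Type} (F : X → PMF W), (μ.map e).bind (fun n => F (k n)) = μ.bind F := by
    intro W F
    rw [PMF.bind_map]
    ext w
    simp only [PMF.bind_apply, Function.comp]
    refine tsum_congr fun x => ?_
    by_cases hx : x ∈ μ.support
    · rw [he x hx]
    · rw [(PMF.apply_eq_zero_iff μ x).2 hx]; simp
  refine ⟨μ.map e, fun n => g (k n), fun n => f (k n), PMF.tsum_coe _, ?_, fun n => h _, ?_⟩
  · intro s
    rw [← PMF.bind_apply, key (fun x => PMF.pure (g x))]
    rfl
  · intro t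
    rw [← PMF.bind_apply, key f]

theorem Lift_pure {Y Z : Type} {S : Y → PMF Z → Prop} {y : Y} {ν : PMF Z} (h : S y ν) :
    Lift S (PMF.pure y) ν := by
  have := Lift_bind (S := S) (PMF.pure ()) (fun _ => y) (fun _ => ν) (fun _ => h)
  simpa [PMF.pure_map] using this

theorem Lift_map {X Y Z : Type} {S : Y → PMF Z → Prop} (μ : PMF X) (g : X → Y)
    (f : X → Z) (h : ∀ x, S (g x) (PMF.pure (f x))) : Lift S (μ.map g) (μ.map f) :=
  Lift_bind μ g (fun x => PMF.pure (f x)) h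

theorem pprod_map_right {X Y Z : Type} (μ : PMF X) (ν : PMF Y) (g : Y → Z) :
    pprod μ (ν.map g) = (pprod μ ν).map (fun z => (z.1, g z.2)) := by
  simp only [pprod, PMF.map_bind, PMF.map_comp]
  rfl

theorem pprod_pure_right {X Y : Type} (μ : PMF X) (y : Y) :
    pprod μ (PMF.pure y) = μ.map (fun x => (x, y)) := by
  simp only [pprod, PMF.pure_map]
  rfl

theorem pprod_pure_left {X Y : Type} (x : X) (ν : PMF Y) :
    pprod (PMF.pure x) ν = ν.map (fun y => (x, y)) := by
  simp only [pprod, PMF.pure_bind]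

theorem WeakStep_of_Lift {α σ : Type} {P : PAut α σ} {a : Option α} {μ ν : PMF σ}
    (h : Lift (step P a) μ ν) : WeakStep P a μ ν :=
  ⟨μ, ν, Relation.ReflTransGen.refl, h, Relation.ReflTransGen.refl⟩

/-- Transitions of a parallel composition transfer along an embedding of the right component. -/
theorem par_trans_map {α σ τ₁ τ₂ : Type} {A : Set α} {P : PAut α σ} {Q : PAut α τ₁}
    {Q' : PAut α τ₂} (g : τ₁ → τ₂)
    (hg : ∀ y a ν, Q.trans y a ν → Q'.trans (g y) a (ν.map g))
    {s : σ × τ₁} {a : Option α} {μ : PMF (σ × τ₁)} (h : (par A P Q).trans s a μ) :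
    (par A P Q').trans (s.1, g s.2) a (μ.map (fun z => (z.1, g z.2))) := by
  obtain ⟨μ₁, ν₁, rfl, h⟩ := h
  refine ⟨μ₁, ν₁.map g, (pprod_map_right _ _ _).symm, ?_⟩
  rcases h with ⟨b, hb, hab, h1, h2⟩ | ⟨ha, h1, h2⟩ | ⟨ha, h1, h2⟩
  · exact Or.inl ⟨b, hb, hab, h1, hg _ _ _ h2⟩
  · exact Or.inr (Or.inl ⟨ha, h1, by rw [h2, PMF.pure_map]⟩)
  · exact Or.inr (Or.inr ⟨ha, hg _ _ _ h1, h2⟩)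

/-- The initial resolution of the choice inside the parallel composition. -/
theorem par_init_step {α σ τ₁ τ₂ : Type} {A : Set α} {P : PAut α σ} {Q' : PAut α τ₂}
    (g : τ₁ → τ₂) (z : τ₂) (ν : PMF τ₁) (h : Q'.trans z none (ν.map g)) :
    Lift (step (par A P Q') none) (pprod P.init (PMF.pure z))
      ((pprod P.init ν).map (fun z => (z.1, g z.2))) := by
  rw [← pprod_map_right, pprod_pure_right]
  refine Lift_bind P.init _ _ fun x => Or.inl ?_
  exact ⟨PMF.pure x, ν.map g, (pprod_pure_left _ _).symm,
    Or.inr (Or.inr ⟨by simp, h, rfl⟩)⟩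

/-- The simulation relation. -/
def subRel {α σ₁ σ₂ σ₃ : Type} (P : PAut α σ₁) :
    Option ((σ₁ × σ₂) ⊕ (σ₁ × σ₃)) → PMF (σ₁ × Option (σ₂ ⊕ σ₃)) → Prop
  | none, ν => ν = pprod P.init (PMF.pure none)
  | some (Sum.inl s), ν => ν = PMF.pure (s.1, some (Sum.inl s.2))
  | some (Sum.inr s), ν => ν = PMF.pure (s.1, some (Sum.inr s.2))

/-- parallel composition subdistributes over nondeterministic
choice: `P ∥_A Q + P ∥_A R ≤ P ∥_A (Q + R)` (the two occurrences of `P` on the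
left are disjoint copies). -/
theorem par_subdistrib_nchoice {α σ₁ σ₂ σ₃ : Type}
    (P : PAut α σ₁) (Q : PAut α σ₂) (R : PAut α σ₃)
    (E A : Set α) (hA : A ⊆ E) :
    Sim (nchoice (par A P Q) (par A P R)) (par A P (nchoice Q R)) := by
  refine ⟨subRel P, ⟨_, Relation.ReflTransGen.refl, Lift_pure rfl⟩, ?_, ?_⟩
  · rintro (_ | s | s) a μ' h ν hS
    · obtain ⟨rfl, h⟩ := h
      obtain rfl : ν = pprod P.init (PMF.pure none) := hS
      rcases h with rfl | rfl
      · exact ⟨_, WeakStep_of_Lift (par_init_step (fun y => some (Sum.inl y)) none Q.init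
          ⟨rfl, Or.inl rfl⟩), Lift_map _ _ _ fun _ => rfl⟩
      · exact ⟨_, WeakStep_of_Lift (par_init_step (fun y => some (Sum.inr y)) none R.init
          ⟨rfl, Or.inr rfl⟩), Lift_map _ _ _ fun _ => rfl⟩
    · obtain rfl : ν = PMF.pure (s.1, some (Sum.inl s.2)) := hS
      obtain ⟨μ, h, rfl⟩ := h
      exact ⟨_, WeakStep_of_Lift (Lift_pure (Or.inl (par_trans_map (Q' := nchoice Q R)
        (fun y => some (Sum.inl y)) (fun y a ν h => ⟨ν, h, rfl⟩) h))),
        Lift_map _ _ _ fun _ => rfl⟩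
    · obtain rfl : ν = PMF.pure (s.1, some (Sum.inr s.2)) := hS
      obtain ⟨μ, h, rfl⟩ := h
      exact ⟨_, WeakStep_of_Lift (Lift_pure (Or.inl (par_trans_map (Q' := nchoice Q R)
        (fun y => some (Sum.inr y)) (fun y a ν h => ⟨ν, h, rfl⟩) h))),
        Lift_map _ _ _ fun _ => rfl⟩
  · rintro x ν (⟨s, hs, rfl⟩ | ⟨s, hs, rfl⟩) hS
    · obtain rfl : ν = PMF.pure (s.1, some (Sum.inl s.2)) := hS
      refine ⟨_, Relation.ReflTransGen.refl, fun y hy => ?_⟩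
      obtain rfl := (PMF.mem_support_pure_iff _ _).1 hy
      exact ⟨hs.1, Or.inl ⟨_, hs.2, rfl⟩⟩
    · obtain rfl : ν = PMF.pure (s.1, some (Sum.inr s.2)) := hS
      refine ⟨_, Relation.ReflTransGen.refl, fun y hy => ?_⟩
      obtain rfl := (PMF.mem_support_pure_iff _ _).1 hy
      exact ⟨hs.1, Or.inr ⟨_, hs.2, rfl⟩⟩

end PCKA
end
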